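/- arXiv:1904.08203 — 9 statements merged into one kernel-verified Lean document; each statement's English description precedes it below -/
import Mathlib

section
/- Let α, β, γ, λ be strictly positive real numbers and let ϱ ∈ (β − γ/α, β). Then there exists δ₀ > 0 such that for every δ ≥ δ₀ there exists p > 0 for which the complex number p + i·q(p) is a root of the polynomial P, i.e. P(p + i·q(p)) = 0. -/
/-- The function `q(x)` from the paper. -/
noncomputable def qfun (α β γ lam δ ϱ x : ℝ) : ℝ :=
  Real.sqrt ((4 * x ^ 3 + 3 * (α + δ) * x ^ 2 + 2 * (α * δ + β * lam) * x
      + lam * (γ + δ * β - ϱ * δ)) / (α + δ + 4 * x))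

/-- The fourth-order polynomial `P(ξ)` from the paper. -/
noncomputable def Ppoly (α β γ lam δ ϱ : ℝ) (ξ : ℂ) : ℂ :=
  ξ ^ 4 + (α + δ : ℝ) * ξ ^ 3 + (α * δ + β * lam : ℝ) * ξ ^ 2
    + (lam * (γ + δ * β - ϱ * δ) : ℝ) * ξ + (lam * γ * δ : ℝ)

/-- Real part of the equation times `(a+4x)^2` changes sign. -/
lemma aux_ivt (a b c d : ℝ) (ha : 0 < a) (hb : 0 < b) (hc : 0 < c) (hd : 0 < d)
    (h0 : 0 < c ^ 2 - a * b * c + a ^ 2 * d) :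
    ∃ p : ℝ, 0 < p ∧ (p ^ 4 + a * p ^ 3 + b * p ^ 2 + c * p + d) * (a + 4 * p) ^ 2
      - (6 * p ^ 2 + 3 * a * p + b) * (4 * p ^ 3 + 3 * a * p ^ 2 + 2 * b * p + c) * (a + 4 * p)
      + (4 * p ^ 3 + 3 * a * p ^ 2 + 2 * b * p + c) ^ 2 = 0 := by
  set G : ℝ → ℝ := fun p => (p ^ 4 + a * p ^ 3 + b * p ^ 2 + c * p + d) * (a + 4 * p) ^ 2
      - (6 * p ^ 2 + 3 * a * p + b) * (4 * p ^ 3 + 3 * a * p ^ 2 + 2 * b * p + c) * (a + 4 * p)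
      + (4 * p ^ 3 + 3 * a * p ^ 2 + 2 * b * p + c) ^ 2 with hG
  have hcont : Continuous G := by rw [hG]; fun_prop
  have hG0 : 0 < G 0 := by
    have : G 0 = c ^ 2 - a * b * c + a ^ 2 * d := by simp only [hG]; ring
    rw [this]; exact h0
  have hle : ∀ x : ℝ, 0 ≤ x → G x ≤ d * (a + 4 * x) ^ 2 + c ^ 2 - 64 * x ^ 6 := by
    intro x hx
    have : 0 ≤ (d * (a + 4 * x) ^ 2 + c ^ 2 - 64 * x ^ 6) - G x := by
      simp only [hG]
      ring_nf
      positivity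
    linarith
  obtain ⟨M, hM⟩ : ∃ M, M = 1 + c + d * (a + 4) ^ 2 := ⟨_, rfl⟩
  have hdp : 0 < d * (a + 4) ^ 2 := by positivity
  have hM1 : 1 ≤ M := by linarith
  have hGM : G M < 0 := by
    have h1 := hle M (by linarith)
    have h2 : (a + 4 * M) ^ 2 ≤ ((a + 4) * M) ^ 2 := by
      apply pow_le_pow_left₀ (by positivity)
      nlinarith
    have h3 : d * (a + 4 * M) ^ 2 ≤ M * M ^ 2 := by
      calc d * (a + 4 * M) ^ 2 ≤ d * ((a + 4) * M) ^ 2 := by gcongr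
        _ = (d * (a + 4) ^ 2) * M ^ 2 := by ring
        _ ≤ M * M ^ 2 := by gcongr; linarith
    have h4 : c ^ 2 ≤ M ^ 2 := by gcongr; linarith
    have h5 : M ^ 2 ≤ M ^ 6 := pow_le_pow_right₀ hM1 (by norm_num)
    have h6 : M ^ 3 ≤ M ^ 6 := pow_le_pow_right₀ hM1 (by norm_num)
    have h7 : 0 < M ^ 6 := by positivity
    nlinarith
  obtain ⟨p, hp, hp0⟩ := intermediate_value_Icc' (by linarith : (0:ℝ) ≤ M) hcont.continuousOn
    (show (0:ℝ) ∈ Set.Icc (G M) (G 0) from ⟨hGM.le, hG0.le⟩)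
  refine ⟨p, lt_of_le_of_ne hp.1 ?_, hp0⟩
  rintro rfl
  linarith

/-- For every `ϱ ∈ (β - γ/α, β)` and every sufficiently large `δ > 0`, there is `p > 0`
such that `p + i q(p)` is a root of `P`. -/
theorem exists_root_of_P (α β γ lam ϱ : ℝ) (hα : 0 < α) (hβ : 0 < β) (hγ : 0 < γ)
    (hlam : 0 < lam) (hϱ₁ : β - γ / α < ϱ) (hϱ₂ : ϱ < β) :
    ∃ δ₀ > 0, ∀ δ ≥ δ₀, ∃ p : ℝ, 0 < p ∧
      Ppoly α β γ lam δ ϱ ((p : ℂ) + Complex.I * (qfun α β γ lam δ ϱ p : ℂ)) = 0 := by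
  obtain ⟨s, hs⟩ : ∃ s, s = β - ϱ := ⟨_, rfl⟩
  have hs0 : 0 < s := by linarith
  have hsk : s < γ / α := by linarith
  have hk : 0 < γ - α * s := by
    rw [lt_div_iff₀ hα] at hsk
    linarith
  obtain ⟨k, hkd⟩ : ∃ k, k = γ - α * s := ⟨_, rfl⟩
  rw [← hkd] at hk
  obtain ⟨E2, hE2⟩ : ∃ E, E = α * γ + s * (α ^ 2 + β * lam) := ⟨_, rfl⟩
  obtain ⟨E1, hE1⟩ : ∃ E, E = γ * (α ^ 2 + β * lam) + s * α * β * lam := ⟨_, rfl⟩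
  obtain ⟨E0, hE0⟩ : ∃ E, E = α * β * lam * γ := ⟨_, rfl⟩
  have e2 : 0 < E2 := by rw [hE2]; positivity
  have e1 : 0 < E1 := by rw [hE1]; positivity
  have e0 : 0 < E0 := by rw [hE0]; positivity
  refine ⟨1 + (E2 + E1 + E0) / k, by positivity, fun δ hδ => ?_⟩
  have hq : 0 < (E2 + E1 + E0) / k := by positivity
  have hδ1 : 1 ≤ δ := by linarith
  have hδ0 : 0 < δ := by linarith
  have hδk : E2 + E1 + E0 < δ * k := by
    rw [← div_lt_iff₀ hk]; linarith
  have hmain : E2 * δ ^ 2 + E1 * δ + E0 < k * δ ^ 3 := by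
    have t1 : (E2 + E1 + E0) * δ ^ 2 < δ * k * δ ^ 2 := by gcongr
    have t2 : δ ≤ δ ^ 2 := by nlinarith
    have t3 : 1 ≤ δ ^ 2 := by nlinarith
    nlinarith
  have hceq : lam * (γ + δ * β - ϱ * δ) = lam * (γ + δ * s) := by rw [hs]; ring
  have hc : 0 < lam * (γ + δ * β - ϱ * δ) := by rw [hceq]; positivity
  obtain ⟨p, hp, hpe⟩ := aux_ivt (α + δ) (α * δ + β * lam) (lam * (γ + δ * β - ϱ * δ))
    (lam * γ * δ) (by positivity) (by positivity) hc (by positivity) (by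
      rw [hceq]
      have e : (lam * (γ + δ * s)) ^ 2 - (α + δ) * (α * δ + β * lam) * (lam * (γ + δ * s))
          + (α + δ) ^ 2 * (lam * γ * δ) = (lam * (γ + δ * s)) ^ 2
          + lam * γ * δ * (2 * α * δ + α ^ 2)
          + lam * (k * δ ^ 3 - (E2 * δ ^ 2 + E1 * δ + E0)) := by
        rw [hkd, hE2, hE1, hE0]; ring
      rw [e]
      have : 0 < k * δ ^ 3 - (E2 * δ ^ 2 + E1 * δ + E0) := by linarith
      positivity)
  refine ⟨p, hp, ?_⟩
  have hq2 : qfun α β γ lam δ ϱ p ^ 2 = (4 * p ^ 3 + 3 * (α + δ) * p ^ 2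
      + 2 * (α * δ + β * lam) * p + lam * (γ + δ * β - ϱ * δ)) / (α + δ + 4 * p) := by
    unfold qfun
    exact Real.sq_sqrt (by positivity)
  unfold Ppoly
  generalize qfun α β γ lam δ ϱ p = q at hq2 ⊢
  generalize lam * (γ + δ * β - ϱ * δ) = c at *
  have ha : 0 < α + δ := by positivity
  generalize α + δ = a at *
  generalize α * δ + β * lam = b at *
  generalize lam * γ * δ = d at *
  have hD : 0 < a + 4 * p := by positivity
  rw [eq_div_iff hD.ne'] at hq2
  have hre : p ^ 4 - 6 * p ^ 2 * q ^ 2 + q ^ 4 + a * (p ^ 3 - 3 * p * q ^ 2)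
      + b * (p ^ 2 - q ^ 2) + c * p + d = 0 := by
    rw [← hq2] at hpe
    have : (a + 4 * p) ^ 2 * (p ^ 4 - 6 * p ^ 2 * q ^ 2 + q ^ 4 + a * (p ^ 3 - 3 * p * q ^ 2)
      + b * (p ^ 2 - q ^ 2) + c * p + d) = 0 := by
      rw [← hpe]; ring
    exact (mul_eq_zero.mp this).resolve_left (by positivity)
  have him : 4 * p ^ 3 * q - 4 * p * q ^ 3 + a * (3 * p ^ 2 * q - q ^ 3) + 2 * b * p * q
      + c * q = 0 := by
    linear_combination (-q) * hq2
  have hreC := congrArg (fun x : ℝ => (x : ℂ)) hre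
  have himC := congrArg (fun x : ℝ => (x : ℂ)) him
  push_cast at hreC himC
  have hI := Complex.I_sq
  linear_combination hreC + Complex.I * himC + ((q:ℂ) ^ 4 * (Complex.I ^ 2 - 1)
    + 4 * p * q ^ 3 * Complex.I + 6 * p ^ 2 * q ^ 2 + a * (q ^ 3 * Complex.I + 3 * p * q ^ 2)
    + b * q ^ 2) * hI
end

section
/- Let α, β, γ, λ, δ be strictly positive real numbers and 0 < ϱ < β. Then f(x) tends to −∞ as x tends to +∞. -/
/-- The function `f(x)` from the paper. -/
noncomputable def ffun (α β γ lam δ ϱ x : ℝ) : ℝ :=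
  x ^ 4 + (α + δ) * x ^ 3 + (α * δ + β * lam) * x ^ 2 + lam * (γ + δ * β - ϱ * δ) * x
    + γ * δ * lam + (qfun α β γ lam δ ϱ x) ^ 4
    - (6 * x ^ 2 + 3 * (α + δ) * x + α * δ + β * lam) * (qfun α β γ lam δ ϱ x) ^ 2

/-- `f(x) → -∞` as `x → +∞`. -/
theorem f_tendsto_atBot (α β γ lam δ ϱ : ℝ) (hα : 0 < α) (hβ : 0 < β) (hγ : 0 < γ)
    (hlam : 0 < lam) (hδ : 0 < δ) (hϱ₀ : 0 < ϱ) (hϱ₂ : ϱ < β) :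
    Filter.Tendsto (ffun α β γ lam δ ϱ) Filter.atTop Filter.atBot := by
  have hc : 0 < lam * (γ + δ * β - ϱ * δ) := by
    apply mul_pos hlam
    nlinarith [mul_pos hδ (sub_pos.2 hϱ₂)]
  have ha : 0 < α + δ := by positivity
  have hb : 0 < α * δ + β * lam := by positivity
  have hd : 0 < γ * δ * lam := by positivity
  refine Filter.tendsto_atBot_mono' _ ?_ Filter.tendsto_neg_atTop_atBot
  filter_upwards [Filter.eventually_ge_atTop
    (1 + lam * (γ + δ * β - ϱ * δ) + γ * δ * lam)] with x hx
  unfold ffun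
  have hq : qfun α β γ lam δ ϱ x ^ 2 = (4 * x ^ 3 + 3 * (α + δ) * x ^ 2
      + 2 * (α * δ + β * lam) * x + lam * (γ + δ * β - ϱ * δ)) / (α + δ + 4 * x) := by
    unfold qfun
    have hx0 : 0 < x := by linarith
    generalize lam * (γ + δ * β - ϱ * δ) = c at *
    exact Real.sq_sqrt (by positivity)
  have h4 : qfun α β γ lam δ ϱ x ^ 4 = (qfun α β γ lam δ ϱ x ^ 2) ^ 2 := by ring
  rw [h4]
  generalize qfun α β γ lam δ ϱ x ^ 2 = Q at *
  rw [add_assoc (6 * x ^ 2 + 3 * (α + δ) * x)]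
  generalize lam * (γ + δ * β - ϱ * δ) = c at *
  generalize γ * δ * lam = d at *
  generalize α * δ + β * lam = b at *
  generalize α + δ = a at *
  have hx1 : 1 ≤ x := by linarith
  have hx0 : 0 < x := by linarith
  have hx3 : x ≤ x ^ 3 := le_self_pow₀ hx1 (by norm_num)
  have hlow : x ^ 2 ≤ Q := by
    rw [hq, le_div_iff₀ (by positivity)]
    have : 0 ≤ 2 * a * x ^ 2 + 2 * b * x + c := by positivity
    nlinarith
  have hup : Q ≤ 5 * x ^ 2 + 3 * a * x + b := by
    rw [hq, div_le_iff₀ (by positivity)]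
    have : 0 ≤ 14 * a * x ^ 2 + (3 * a ^ 2 + 2 * b) * x + a * b + 15 * x ^ 3 := by positivity
    nlinarith
  have hm := mul_nonneg (sub_nonneg.2 hlow) (sub_nonneg.2 hup)
  have h1 : c * x + d + x ≤ x * x := by
    nlinarith
  have h2 : x * x ≤ x ^ 4 := by
    calc x * x = x ^ 2 := by ring
      _ ≤ x ^ 4 := pow_le_pow_right₀ hx1 (by norm_num)
  have h3 : 0 ≤ a * x ^ 3 := by positivity
  have h5 : 0 ≤ x ^ 4 := by positivity
  nlinarith [hm, h1, h2, h3, h5]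
end

section
/- Let α, β, γ, λ be strictly positive real numbers and 0 < ϱ < β. For each δ > 0 write f_δ(0) = γδλ + q_δ(0)⁴ − (αδ + βλ)·q_δ(0)², where q_δ(0)² = λ(γ + δβ − ϱδ)/(α + δ). Then f_δ(0)/δ converges to λ(γ − αβ + αϱ) as δ → +∞. In particular, if moreover ϱ > β − γ/α, then there exists δ₀ > 0 such that f_δ(0) > 0 for every δ ≥ δ₀. -/
/-- The value `q_δ(0) = sqrt(λ(γ + δβ − ϱδ)/(α + δ))`. -/
noncomputable def qzero (α β γ lam ϱ δ : ℝ) : ℝ :=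
  Real.sqrt (lam * (γ + δ * β - ϱ * δ) / (α + δ))

/-- The value `f_δ(0) = γδλ + q_δ(0)⁴ − (αδ + βλ)·q_δ(0)²`. -/
noncomputable def fzero (α β γ lam ϱ δ : ℝ) : ℝ :=
  γ * δ * lam + (qzero α β γ lam ϱ δ) ^ 4 - (α * δ + β * lam) * (qzero α β γ lam ϱ δ) ^ 2

/-- `f_δ(0)/δ → λ(γ − αβ + αϱ)` as `δ → +∞`; in particular, if `ϱ > β − γ/α`, then
`f_δ(0) > 0` for all sufficiently large `δ`. -/
theorem fzero_asymptotics (α β γ lam ϱ : ℝ) (hα : 0 < α) (hβ : 0 < β) (hγ : 0 < γ)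
    (hlam : 0 < lam) (hϱ₀ : 0 < ϱ) (hϱ₂ : ϱ < β) :
    Filter.Tendsto (fun δ : ℝ => fzero α β γ lam ϱ δ / δ) Filter.atTop
      (nhds (lam * (γ - α * β + α * ϱ))) ∧
    (β - γ / α < ϱ → ∃ δ₀ > 0, ∀ δ ≥ δ₀, 0 < fzero α β γ lam ϱ δ) := by
  have hlim : Filter.Tendsto (fun δ : ℝ => fzero α β γ lam ϱ δ / δ) Filter.atTop
      (nhds (lam * (γ - α * β + α * ϱ))) := by
    have hc : ContinuousAt (fun u : ℝ => γ * lam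
        + (lam * (γ * u + β - ϱ) / (α * u + 1)) ^ 2 * u
        - (α + β * lam * u) * (lam * (γ * u + β - ϱ) / (α * u + 1))) 0 := by
      have hd : ContinuousAt (fun u : ℝ => lam * (γ * u + β - ϱ) / (α * u + 1)) 0 :=
        ContinuousAt.div (by fun_prop) (by fun_prop) (by norm_num)
      fun_prop
    have ht := hc.tendsto.comp (tendsto_inv_atTop_zero (𝕜 := ℝ))
    have hv : lam * (γ - α * β + α * ϱ) = γ * lam
        + (lam * (γ * 0 + β - ϱ) / (α * 0 + 1)) ^ 2 * 0
        - (α + β * lam * 0) * (lam * (γ * 0 + β - ϱ) / (α * 0 + 1)) := by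
      simp; ring
    rw [hv]
    refine ht.congr' ?_
    filter_upwards [Filter.eventually_gt_atTop 0] with δ hδ
    have hQ : lam * (γ * δ⁻¹ + β - ϱ) / (α * δ⁻¹ + 1)
        = lam * (γ + δ * β - ϱ * δ) / (α + δ) := by
      have h1 : α + δ ≠ 0 := by positivity
      have h2 : α * δ⁻¹ + 1 ≠ 0 := by positivity
      rw [div_eq_div_iff h2 h1]
      field_simp
    have hnn : 0 ≤ lam * (γ + δ * β - ϱ * δ) / (α + δ) := by
      have : 0 ≤ γ + δ * β - ϱ * δ := by nlinarith
      positivity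
    have h2 : qzero α β γ lam ϱ δ ^ 2 = lam * (γ + δ * β - ϱ * δ) / (α + δ) :=
      Real.sq_sqrt hnn
    have h4 : qzero α β γ lam ϱ δ ^ 4 = (lam * (γ + δ * β - ϱ * δ) / (α + δ)) ^ 2 := by
      rw [← h2]; ring
    simp only [Function.comp, fzero]
    rw [hQ, h2, h4]
    generalize lam * (γ + δ * β - ϱ * δ) / (α + δ) = Q
    field_simp
  refine ⟨hlim, fun h => ?_⟩
  have hpos : 0 < lam * (γ - α * β + α * ϱ) := by
    apply mul_pos hlam
    have h1 : α * (β - γ / α) < α * ϱ := mul_lt_mul_of_pos_left h hα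
    have h2 : α * (β - γ / α) = α * β - γ := by field_simp
    linarith
  obtain ⟨a, ha⟩ := Filter.eventually_atTop.1 (hlim.eventually (lt_mem_nhds hpos))
  refine ⟨max a 1, by positivity, fun δ hδ => ?_⟩
  have hd : 0 < δ := lt_of_lt_of_le (by positivity) hδ
  exact (div_pos_iff_of_pos_right hd).1 (ha δ (le_trans (le_max_left _ _) hδ))
end

section
/- Let α, β, γ, λ, δ be strictly positive real numbers with γ ≤ αβ and 0 < ϱ < β. Then for every p ≥ 0, writing q = q(p), one has the identity q³ − 3p²q − 2αpq − βλq = −q·(8p³ + 8αp² + 2α²p + 2βλp + λϱδ + λ(αβ − γ))/(α + δ + 4p), and this quantity is strictly negative. -/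
/-- For every `p ≥ 0`, writing `q = q(p)`, one has the identity
`q³ − 3p²q − 2αpq − βλq = −q(8p³ + 8αp² + 2α²p + 2βλp + λϱδ + λ(αβ−γ))/(α+δ+4p)`,
and this quantity is strictly negative. -/
theorem denominator_negative (α β γ lam δ ϱ : ℝ) (hα : 0 < α) (hβ : 0 < β) (hγ : 0 < γ)
    (hlam : 0 < lam) (hδ : 0 < δ) (hγαβ : γ ≤ α * β) (hϱ₀ : 0 < ϱ) (hϱ₂ : ϱ < β) :
    ∀ p : ℝ, 0 ≤ p →
      (qfun α β γ lam δ ϱ p) ^ 3 - 3 * p ^ 2 * qfun α β γ lam δ ϱ p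
          - 2 * α * p * qfun α β γ lam δ ϱ p - β * lam * qfun α β γ lam δ ϱ p
        = -(qfun α β γ lam δ ϱ p) * (8 * p ^ 3 + 8 * α * p ^ 2 + 2 * α ^ 2 * p
            + 2 * β * lam * p + lam * ϱ * δ + lam * (α * β - γ)) / (α + δ + 4 * p) ∧
      (qfun α β γ lam δ ϱ p) ^ 3 - 3 * p ^ 2 * qfun α β γ lam δ ϱ p
          - 2 * α * p * qfun α β γ lam δ ϱ p - β * lam * qfun α β γ lam δ ϱ p < 0 := by
  intro p hp
  have hD : 0 < α + δ + 4 * p := by positivity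
  have hN : 0 < 4 * p ^ 3 + 3 * (α + δ) * p ^ 2 + 2 * (α * δ + β * lam) * p
      + lam * (γ + δ * β - ϱ * δ) := by
    have h1 : 0 < γ + δ * β - ϱ * δ := by nlinarith
    positivity
  have hq : 0 < qfun α β γ lam δ ϱ p := Real.sqrt_pos.mpr (div_pos hN hD)
  have hsq : (qfun α β γ lam δ ϱ p) ^ 2 = (4 * p ^ 3 + 3 * (α + δ) * p ^ 2
      + 2 * (α * δ + β * lam) * p + lam * (γ + δ * β - ϱ * δ)) / (α + δ + 4 * p) :=
    Real.sq_sqrt (div_pos hN hD).le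
  generalize qfun α β γ lam δ ϱ p = q at hq hsq ⊢
  rw [eq_div_iff hD.ne'] at hsq
  have key : q ^ 3 - 3 * p ^ 2 * q - 2 * α * p * q - β * lam * q
      = -q * (8 * p ^ 3 + 8 * α * p ^ 2 + 2 * α ^ 2 * p
            + 2 * β * lam * p + lam * ϱ * δ + lam * (α * β - γ)) / (α + δ + 4 * p) := by
    rw [eq_div_iff hD.ne']
    linear_combination q * hsq
  refine ⟨key, ?_⟩
  rw [key]
  apply div_neg_of_neg_of_pos _ hD
  have h2 : 0 ≤ α * β - γ := by linarith
  have h3 : 0 < 8 * p ^ 3 + 8 * α * p ^ 2 + 2 * α ^ 2 * p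
            + 2 * β * lam * p + lam * ϱ * δ + lam * (α * β - γ) := by positivity
  exact mul_neg_of_neg_of_pos (neg_lt_zero.mpr hq) h3
end

section
/- Let H be a real Hilbert space, A : H → H a continuous linear operator, and α, β, γ, ϱ, δ > 0. Suppose u : ℝ → H is four times continuously differentiable, satisfies on [0,∞) the fourth-order equation u''''(t) + (α+δ)u'''(t) + αδ·u''(t) + β·A u''(t) + (γ + δβ − ϱδ)·A u'(t) + γδ·A u(t) = 0, and satisfies the compatibility condition u'''(0) = −α·u''(0) − A(β·u'(0) + γ·u(0)). Then for every t ≥ 0, u'''(t) + α·u''(t) + β·A u'(t) + γ·A u(t) − ϱδ·∫₀ᵗ e^{−δ(t−s)} A u'(s) ds = 0. -/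
/-- If `u` solves the fourth-order equation on `[0,∞)` and satisfies the compatibility
condition `u'''(0) = −αu''(0) − A(βu'(0) + γu(0))`, then `u` solves the MGT equation with
exponential memory kernel of type II. -/
theorem fourth_order_to_memory {H : Type*} [NormedAddCommGroup H] [InnerProductSpace ℝ H]
    [CompleteSpace H] (A : H →L[ℝ] H) (α β γ ϱ δ : ℝ)
    (hα : 0 < α) (hβ : 0 < β) (hγ : 0 < γ) (hϱ : 0 < ϱ) (hδ : 0 < δ)
    (u : ℝ → H) (hu : ContDiff ℝ 4 u)
    (heq : ∀ t : ℝ, 0 ≤ t →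
      iteratedDeriv 4 u t + (α + δ) • iteratedDeriv 3 u t + (α * δ) • iteratedDeriv 2 u t
        + β • A (iteratedDeriv 2 u t) + (γ + δ * β - ϱ * δ) • A (deriv u t)
        + (γ * δ) • A (u t) = 0)
    (hic : iteratedDeriv 3 u 0 = -(α • iteratedDeriv 2 u 0) - A (β • deriv u 0 + γ • u 0)) :
    ∀ t : ℝ, 0 ≤ t →
      iteratedDeriv 3 u t + α • iteratedDeriv 2 u t + β • A (deriv u t) + γ • A (u t)
        - (ϱ * δ) • ∫ s in (0 : ℝ)..t, Real.exp (-δ * (t - s)) • A (deriv u s) = 0 := by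
  intro t ht
  have hd : ∀ n : ℕ, n < 4 → ∀ s : ℝ,
      HasDerivAt (iteratedDeriv n u) (iteratedDeriv (n + 1) u s) s := by
    intro n hn s
    rw [iteratedDeriv_succ]
    exact ((hu.differentiable_iteratedDeriv n (by exact_mod_cast hn)) s).hasDerivAt
  have h0 : ∀ s : ℝ, HasDerivAt u (deriv u s) s := by
    intro s
    have := hd 0 (by norm_num) s
    simpa [iteratedDeriv_zero, iteratedDeriv_one] using this
  have h1 : ∀ s : ℝ, HasDerivAt (deriv u) (iteratedDeriv 2 u s) s := by
    intro s
    have := hd 1 (by norm_num) s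
    rwa [iteratedDeriv_one] at this
  have h2 := hd 2 (by norm_num)
  have h3 := hd 3 (by norm_num)
  have hexp : ∀ s : ℝ, HasDerivAt (fun s => Real.exp (-δ * (t - s)))
      (Real.exp (-δ * (t - s)) * δ) s := by
    intro s
    have := (((hasDerivAt_id s).const_sub t).const_mul (-δ)).exp
    simpa using this
  have hG : ∀ s : ℝ, 0 ≤ s → HasDerivAt (fun s => Real.exp (-δ * (t - s)) •
      (iteratedDeriv 3 u s + α • iteratedDeriv 2 u s + β • A (deriv u s) + γ • A (u s)))
      ((ϱ * δ) • (Real.exp (-δ * (t - s)) • A (deriv u s))) s := by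
    intro s hs
    have hF := (((h3 s).add ((h2 s).const_smul α)).add
      ((A.hasFDerivAt.comp_hasDerivAt s (h1 s)).const_smul β)).add
      ((A.hasFDerivAt.comp_hasDerivAt s (h0 s)).const_smul γ)
    refine ((hexp s).smul hF).congr_deriv ?_
    have e := heq s hs
    simp only [Pi.add_apply, Pi.smul_apply, Function.comp_apply, Nat.reduceAdd] at e ⊢
    have e4 := eq_neg_of_add_eq_zero_left (by simpa only [add_assoc] using e)
    rw [e4]
    module
  have hc : Continuous (deriv u) := continuous_iff_continuousAt.2 fun s => (h1 s).continuousAt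
  have hint := intervalIntegral.integral_eq_sub_of_hasDerivAt (a := 0) (b := t)
    (fun s hs => hG s (by rw [Set.uIcc_of_le ht] at hs; exact hs.1))
    (Continuous.intervalIntegrable (by fun_prop) _ _)
  rw [intervalIntegral.integral_smul] at hint
  rw [hint, hic]
  simp only [map_add, map_smul, sub_self, mul_zero, Real.exp_zero]
  module
end

section
/- Let H be a real Hilbert space, A : H → H a continuous self-adjoint linear operator, λ > 0, and w ∈ H with ‖w‖ = 1 and A w = λ·w. Let α, β, γ > 0 satisfy γ ≤ αβ, and let ϱ ∈ (β − γ/α, β). Then there exists δ₀ > 0 such that for every δ ≥ δ₀ there exist ε > 0, an infinitely differentiable function u : ℝ → H, and a strictly increasing sequence (tₙ) of positive reals tending to +∞, such that u satisfies, for every t ≥ 0, the equation u'''(t) + α·u''(t) + β·A u'(t) + γ·A u(t) − ϱδ·∫₀ᵗ e^{−δ(t−s)} A u'(s) ds = 0, and moreover ⟨A u(tₙ), u(tₙ)⟩ ≥ λ·e^{ε·tₙ} for every n. -/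
open scoped RealInnerProductSpace

lemma mgt_quartic_root (a1 a2 a3 a4 : ℝ) (h1 : 0 < a1) (h2 : 0 < a2) (h3 : 0 < a3) (h4 : 0 < a4)
    (hD : a1 * a2 * a3 - a3 ^ 2 - a1 ^ 2 * a4 < 0) :
    ∃ z : ℂ, 0 < z.re ∧ 0 < z.im ∧ z ^ 4 + a1 * z ^ 3 + a2 * z ^ 2 + a3 * z + a4 = 0 := by
  obtain ⟨x, hx0, hx⟩ : ∃ x : ℝ, 0 < x ∧
      (a3 + x * (a2 + a1 * x + x ^ 2)) * ((a1 + x) * (a2 + a1 * x + x ^ 2) - a3)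
        - a4 * (a1 + 2 * x) ^ 2 = 0 := by
    set G : ℝ → ℝ := fun x =>
      (a3 + x * (a2 + a1 * x + x ^ 2)) * ((a1 + x) * (a2 + a1 * x + x ^ 2) - a3)
        - a4 * (a1 + 2 * x) ^ 2 with hG
    have hc : Continuous G := by fun_prop
    set M : ℝ := 2 + a3 + 4 * a4 with hM
    have hM0 : 0 ≤ M := by positivity
    have hG0 : G 0 ≤ 0 := by simp only [hG]; nlinarith
    have hGM : 0 ≤ G M := by
      simp only [hG]
      have hM1 : 1 ≤ M := by linarith
      have e1 : M ^ 2 * (a1 + M) ≤ a3 + M * (a2 + a1 * M + M ^ 2) := by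
        have : 0 ≤ M * a2 := by positivity
        nlinarith
      have e2 : (M - 1) * (a1 + M) ^ 2 ≤ (a1 + M) * (a2 + a1 * M + M ^ 2) - a3 := by
        have i1 : 0 ≤ (a1 + M) * a2 := by positivity
        have i2 : a3 ≤ (a1 + M) ^ 2 := by nlinarith
        nlinarith
      have e3 : (M ^ 2 * (a1 + M)) * ((M - 1) * (a1 + M) ^ 2) ≤ _ :=
        mul_le_mul e1 e2 (mul_nonneg (by linarith) (by positivity)) (by positivity)
      have e4 : 4 * a4 ≤ (M ^ 2 * (a1 + M)) * (M - 1) := by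
        have : 1 ≤ M ^ 2 * (a1 + M) := by
          have : 1 ≤ M ^ 2 := by nlinarith
          nlinarith
        nlinarith
      have e5 : 4 * a4 * (a1 + M) ^ 2 ≤ (M ^ 2 * (a1 + M)) * (M - 1) * (a1 + M) ^ 2 :=
        mul_le_mul_of_nonneg_right e4 (by positivity)
      have e6 : a4 * (a1 + 2 * M) ^ 2 ≤ a4 * (4 * (a1 + M) ^ 2) :=
        mul_le_mul_of_nonneg_left (by nlinarith [mul_nonneg h1.le hM0]) h4.le
      have e7 : (M ^ 2 * (a1 + M)) * ((M - 1) * (a1 + M) ^ 2)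
        = (M ^ 2 * (a1 + M)) * (M - 1) * (a1 + M) ^ 2 := by ring
      have e8 : a4 * (4 * (a1 + M) ^ 2) = 4 * a4 * (a1 + M) ^ 2 := by ring
      exact sub_nonneg.mpr (e6.trans (e8.le.trans (e5.trans (e7.ge.trans e3))))
    obtain ⟨x, hxm, hx⟩ := intermediate_value_Icc hM0 hc.continuousOn ⟨hG0, hGM⟩
    refine ⟨x, lt_of_le_of_ne hxm.1 ?_, hx⟩
    rintro rfl
    simp only [hG] at hx
    nlinarith
  set σ := a2 + a1 * x + x ^ 2 with hσ
  have hk : 0 < a1 + 2 * x := by positivity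
  set q := (a3 + x * σ) / (a1 + 2 * x) with hq
  set s := ((a1 + x) * σ - a3) / (a1 + 2 * x) with hs
  have f1 : q + s = σ := by rw [hq, hs]; field_simp; ring
  have f2 : q * s = a4 := by rw [hq, hs]; field_simp; linarith
  have f3 : (a1 + x) * q - x * s = a3 := by rw [hq, hs]; field_simp; ring
  have fac : ∀ z : ℂ, z ^ 4 + a1 * z ^ 3 + a2 * z ^ 2 + a3 * z + a4
      = (z ^ 2 - x * z + q) * (z ^ 2 + (a1 + x) * z + s) := by
    intro z
    have g1 : (q : ℂ) + s = a2 + a1 * x + x ^ 2 := by exact_mod_cast f1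
    have g2 : (q : ℂ) * s = a4 := by exact_mod_cast f2
    have g3 : ((a1 : ℂ) + x) * q - x * s = a3 := by exact_mod_cast f3
    rw [← g2, ← g3]
    linear_combination (-z ^ 2) * g1
  have hdisc : 0 < 4 * q - x ^ 2 := by
    by_contra hn
    have hr := Real.sq_sqrt (show 0 ≤ x ^ 2 - 4 * q by linarith)
    have hr0 := Real.sqrt_nonneg (x ^ 2 - 4 * q)
    set r := Real.sqrt (x ^ 2 - 4 * q)
    set y := (x + r) / 2 with hy
    have hy0 : 0 < y := by positivity
    have := fac (y : ℂ)
    have hyr : y ^ 4 + a1 * y ^ 3 + a2 * y ^ 2 + a3 * y + a4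
      = (y ^ 2 - x * y + q) * (y ^ 2 + (a1 + x) * y + s) := by exact_mod_cast this
    have h0 : y ^ 2 - x * y + q = 0 := by rw [hy]; linarith
    rw [h0, zero_mul] at hyr
    have : 0 < y ^ 4 + a1 * y ^ 3 + a2 * y ^ 2 + a3 * y + a4 := by positivity
    linarith
  refine ⟨⟨x / 2, Real.sqrt (4 * q - x ^ 2) / 2⟩, by simpa using hx0, ?_, ?_⟩
  · have := Real.sqrt_pos.mpr hdisc
    simpa using this
  · have hr := Real.sq_sqrt hdisc.le
    rw [fac]
    convert zero_mul _
    set r := Real.sqrt (4 * q - x ^ 2)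
    apply Complex.ext
    · simp [pow_two]; nlinarith
    · simp [pow_two]; ring

lemma mgt_delta (lam α β γ m : ℝ) (hlam : 0 < lam) (hα : 0 < α) (hβ : 0 < β) (hγ : 0 < γ)
    (hm : 0 < m) (hκ : α * m < γ) : ∃ δ₀ > 0, ∀ δ ≥ δ₀,
    (α + δ) * (α * δ + β * lam) * (lam * δ * m + γ * lam) - (lam * δ * m + γ * lam) ^ 2
      - (α + δ) ^ 2 * (γ * lam * δ) < 0 := by
  have hk : 0 < γ - α * m := by linarith
  set P := α ^ 2 * m + β * lam * m with hP
  set Q := α * β * lam * m + β * lam * γ with hQ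
  set R := α * β * lam * γ with hR
  have hP0 : 0 < P := by positivity
  have hQ0 : 0 < Q := by positivity
  have hR0 : 0 < R := by positivity
  refine ⟨1 + (P + Q + R) / (γ - α * m), by positivity, fun δ hδ => ?_⟩
  have hδ1 : 1 ≤ δ := by
    have : 0 ≤ (P + Q + R) / (γ - α * m) := by positivity
    linarith
  have hδk : P + Q + R < (γ - α * m) * δ := by
    have : (P + Q + R) / (γ - α * m) < δ := by linarith
    rw [div_lt_iff₀ hk] at this
    linarith
  have key : P * δ ^ 2 + Q * δ + R < (γ - α * m) * δ ^ 3 := by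
    have a1 : (P + Q + R) * δ ^ 2 < (γ - α * m) * δ * δ ^ 2 :=
      mul_lt_mul_of_pos_right hδk (by positivity)
    have a2 : Q * δ ≤ Q * δ ^ 2 := mul_le_mul_of_nonneg_left (by nlinarith) hQ0.le
    have a3 : R * 1 ≤ R * δ ^ 2 := mul_le_mul_of_nonneg_left (by nlinarith) hR0.le
    nlinarith
  have hδ0 : 0 < δ := by linarith
  have pos : 0 < lam * ((α * γ + lam * m ^ 2) * δ ^ 2 + 2 * lam * m * γ * δ + lam * γ ^ 2) := by
    positivity
  have := mul_lt_mul_of_pos_left key hlam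
  rw [hP, hQ, hR] at this
  nlinarith

theorem mgt_memory_exponential_growth {H : Type*} [NormedAddCommGroup H]
    [InnerProductSpace ℝ H] [CompleteSpace H] (A : H →L[ℝ] H)
    (hsa : ∀ x y : H, ⟪A x, y⟫ = ⟪x, A y⟫) (lam : ℝ) (hlam : 0 < lam)
    (w : H) (hw : ‖w‖ = 1) (hAw : A w = lam • w)
    (α β γ : ℝ) (hα : 0 < α) (hβ : 0 < β) (hγ : 0 < γ) (hγαβ : γ ≤ α * β)
    (ϱ : ℝ) (hϱ₁ : β - γ / α < ϱ) (hϱ₂ : ϱ < β) :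
    ∃ δ₀ > 0, ∀ δ ≥ δ₀, ∃ ε > 0, ∃ u : ℝ → H, ContDiff ℝ (⊤ : ℕ∞) u ∧
      ∃ tseq : ℕ → ℝ, StrictMono tseq ∧ (∀ n, 0 < tseq n) ∧
        Filter.Tendsto tseq Filter.atTop Filter.atTop ∧
        (∀ t : ℝ, 0 ≤ t →
          iteratedDeriv 3 u t + α • iteratedDeriv 2 u t + β • A (deriv u t) + γ • A (u t)
            - (ϱ * δ) • ∫ s in (0 : ℝ)..t, Real.exp (-δ * (t - s)) • A (deriv u s) = 0) ∧
        (∀ n : ℕ, lam * Real.exp (ε * tseq n) ≤ ⟪A (u (tseq n)), u (tseq n)⟫) := by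
  have hm : 0 < β - ϱ := by linarith
  have hκ : α * (β - ϱ) < γ := by
    have : β - ϱ < γ / α := by linarith
    rw [lt_div_iff₀ hα] at this
    linarith
  obtain ⟨δ₀, hδ₀, hD⟩ := mgt_delta lam α β γ (β - ϱ) hlam hα hβ hγ hm hκ
  refine ⟨δ₀, hδ₀, fun δ hδ => ?_⟩
  have hδ0 : 0 < δ := lt_of_lt_of_le hδ₀ hδ
  obtain ⟨z, hzr, hzi, hz⟩ := mgt_quartic_root (α + δ) (α * δ + β * lam)
    (lam * δ * (β - ϱ) + γ * lam) (γ * lam * δ) (by positivity) (by positivity) (by positivity)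
    (by positivity) (hD δ hδ)
  set Q : ℂ := z ^ 3 + α * z ^ 2 + β * lam * z + γ * lam with hQ
  set θ : ℝ := Real.pi / 2 - Q.arg with hθ
  set c : ℂ := Complex.exp (θ * Complex.I) with hc
  have hcQ : (c * Q).re = 0 := by
    have : c * Q = (‖Q‖ : ℂ) * Complex.I := by
      conv_lhs => rw [← Complex.norm_mul_exp_arg_mul_I Q]
      rw [hc, mul_left_comm, ← Complex.exp_add, ← add_mul, hθ]
      push_cast
      rw [sub_add_cancel, Complex.exp_pi_div_two_mul_I]
    rw [this]; simp
  set f : ℕ → ℝ → ℝ := fun k t => (c * z ^ k * Complex.exp (z * t)).re with hf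
  have hfd : ∀ k t, HasDerivAt (f k) (f (k + 1) t) t := by
    intro k t
    have h1 : HasDerivAt (fun y : ℂ => c * z ^ k * Complex.exp (z * y))
        (c * z ^ (k + 1) * Complex.exp (z * t)) (t : ℂ) := by
      have := (((hasDerivAt_id' (t : ℂ)).const_mul z).cexp).const_mul (c * z ^ k)
      refine this.congr_deriv ?_
      ring
    exact h1.real_of_complex
  have hfs : ∀ k, ContDiff ℝ (⊤ : ℕ∞) (f k) := by
    intro k
    have h1 : ContDiff ℝ (⊤ : ℕ∞) (fun t : ℝ => c * z ^ k * Complex.exp (z * t)) := by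
      have : ContDiff ℝ (⊤ : ℕ∞) (fun t : ℝ => (t : ℂ)) := Complex.ofRealCLM.contDiff
      fun_prop
    exact Complex.reCLM.contDiff.comp h1
  have hud : ∀ k, deriv (fun t => f k t • w) = fun t => f (k + 1) t • w := by
    intro k; funext t
    exact ((hfd k t).smul_const w).deriv
  have hfe : ∀ t, f 4 t + (α + δ) * f 3 t + (α * δ + β * lam) * f 2 t
      + (lam * δ * (β - ϱ) + γ * lam) * f 1 t + γ * lam * δ * f 0 t = 0 := by
    intro t
    have := congrArg (fun y : ℂ => (y * (c * Complex.exp (z * t))).re) hz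
    simp only [zero_mul, Complex.zero_re] at this
    rw [← this]
    simp only [hf, ← Complex.re_ofReal_mul, ← Complex.add_re]
    congr 1
    push_cast
    ring
  have hf0 : f 3 0 + α * f 2 0 + β * lam * f 1 0 + γ * lam * f 0 0 = 0 := by
    refine Eq.trans ?_ hcQ
    simp only [hf, hQ, ← Complex.re_ofReal_mul, ← Complex.add_re]
    congr 1
    push_cast
    simp
    ring
  have hpi := Real.pi_pos
  refine ⟨2 * z.re, by positivity, fun t => f 0 t • w, (hfs 0).smul contDiff_const,
    fun n => (2 * Real.pi * (n + 1) - θ) / z.im, ?_, ?_, ?_, ?_, ?_⟩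
  · intro a b hab
    have : (a : ℝ) < b := by exact_mod_cast hab
    simp only
    gcongr
  · intro n
    apply div_pos _ hzi
    have h1 := Complex.neg_pi_lt_arg Q
    have : 0 ≤ Real.pi * n := by positivity
    rw [hθ]; nlinarith
  · apply Filter.Tendsto.atTop_div_const hzi
    apply Filter.tendsto_atTop_add_const_right
    apply Filter.Tendsto.const_mul_atTop (by positivity)
    exact Filter.tendsto_atTop_add_const_right _ _ tendsto_natCast_atTop_atTop
  · intro t ht
    have e3 : iteratedDeriv 3 (fun t => f 0 t • w) = fun t => f 3 t • w := by
      simp only [iteratedDeriv_succ, iteratedDeriv_zero, hud]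
    have e2 : iteratedDeriv 2 (fun t => f 0 t • w) = fun t => f 2 t • w := by
      simp only [iteratedDeriv_succ, iteratedDeriv_zero, hud]
    rw [e3, e2, hud]
    have hint : (ϱ * δ) • ∫ s in (0 : ℝ)..t, Real.exp (-δ * (t - s)) • A (f (0 + 1) s • w)
        = (f 3 t + α * f 2 t + β * lam * f 1 t + γ * lam * f 0 t) • w := by
      have hV : ∀ s ∈ Set.uIcc 0 t, HasDerivAt (fun s => (Real.exp (-δ * (t - s)) *
          (f 3 s + α * f 2 s + β * lam * f 1 s + γ * lam * f 0 s)) • w)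
          ((ϱ * δ) • (Real.exp (-δ * (t - s)) • A (f (0 + 1) s • w))) s := by
        intro s _
        have hE : HasDerivAt (fun s => Real.exp (-δ * (t - s)))
            (Real.exp (-δ * (t - s)) * δ) s := by
          have := (((hasDerivAt_id' s).const_sub t).const_mul (-δ)).exp
          convert this using 1
          ring
        have hW := (((hfd 3 s).add ((hfd 2 s).const_mul α)).add
          ((hfd 1 s).const_mul (β * lam))).add ((hfd 0 s).const_mul (γ * lam))
        have := (hE.mul hW).smul_const w
        refine this.congr_deriv ?_
        rw [map_smul, hAw]
        simp only [smul_smul]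
        congr 1
        simp only [Pi.add_apply, zero_add, Nat.reduceAdd]
        linear_combination (Real.exp (-δ * (t - s))) * hfe s
      rw [← intervalIntegral.integral_smul,
        intervalIntegral.integral_eq_sub_of_hasDerivAt hV, hf0]
      · simp
      · apply Continuous.intervalIntegrable
        have := (hfs (0 + 1)).continuous
        fun_prop
    rw [hint]
    simp only [map_smul, hAw, smul_smul, ← add_smul, ← sub_smul, zero_add]
    rw [show ∀ x : ℝ, x = 0 → x • w = 0 from fun x hx => by rw [hx, zero_smul]]
    ring
  · intro n
    set τ := (2 * Real.pi * (n + 1) - θ) / z.im with hτ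
    have hτi : z.im * τ = 2 * Real.pi * (n + 1) - θ := by rw [hτ]; field_simp
    have hfτ : f 0 τ = Real.exp (z.re * τ) := by
      have : c * z ^ 0 * Complex.exp (z * τ) = (Real.exp (z.re * τ) : ℂ) := by
        rw [pow_zero, mul_one, hc, ← Complex.exp_add, Complex.ofReal_exp]
        rw [Complex.exp_eq_exp_iff_exists_int]
        refine ⟨n + 1, ?_⟩
        apply Complex.ext
        · simp
        · simp; linarith
      simp only [hf]
      rw [this, Complex.ofReal_re]
    change lam * Real.exp (2 * z.re * τ) ≤ ⟪A (f 0 τ • w), f 0 τ • w⟫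
    rw [hfτ]
    simp only [map_smul, hAw, real_inner_smul_left, real_inner_smul_right,
      real_inner_self_eq_norm_sq, hw]
    rw [show 2 * z.re * τ = z.re * τ + z.re * τ by ring, Real.exp_add]
    apply le_of_eq
    ring
end

section
/- Let α, β, γ, λ > 0 satisfy γ ≤ αβ, and let ϱ ∈ (β − γ/α, β). Then there exists δ₀ > 0 such that for every δ ≥ δ₀ there exist ε > 0, an infinitely differentiable function ψ : ℝ → ℝ, and a strictly increasing sequence (tₙ) of positive reals tending to +∞, such that ψ satisfies, for every t ≥ 0, the scalar equation ψ'''(t) + α·ψ''(t) + βλ·ψ'(t) + γλ·ψ(t) − ϱδλ·∫₀ᵗ e^{−δ(t−s)} ψ'(s) ds = 0, and moreover ψ(tₙ)² ≥ e^{ε·tₙ} for every n. -/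
lemma mgt_quartic (A0 A1 A2 A3 : ℝ) (h0 : 0 < A0) (h1 : 0 < A1) (h2 : 0 < A2) (h3 : 0 < A3)
    (hH : A1 * (A3 * A2 - A1) < A0 * A3 ^ 2) :
    ∃ p : ℂ, 0 < p.re ∧ 0 < p.im ∧
      p ^ 4 + A3 * p ^ 3 + A2 * p ^ 2 + A1 * p + A0 = 0 := by
  let F : ℝ → ℝ := fun u => (A1 + u * (A2 + u * (A3 + u))) * ((A3 + u) * (A2 + u * (A3 + u)) - A1)
    - A0 * (A3 + u + u) ^ 2
  have hF : Continuous F := by fun_prop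
  set U : ℝ := 2 + A3 + A1 + 9 * A0 with hU
  have hU2 : 2 ≤ U := by linarith
  have hFU : 0 ≤ F U := by
    have hM : U ^ 2 ≤ A2 + U * (A3 + U) := by nlinarith [mul_pos (show 0 < U by linarith) h3]
    have e1 : U ^ 3 ≤ A1 + U * (A2 + U * (A3 + U)) := by
      have := mul_le_mul_of_nonneg_left hM (show 0 ≤ U by linarith)
      nlinarith
    have e2 : U ^ 2 ≤ (A3 + U) * (A2 + U * (A3 + U)) - A1 := by
      have := mul_le_mul (show U ≤ A3 + U by linarith) hM (by positivity) (by linarith)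
      have h4 : U ≤ U * U := by nlinarith
      have h5 : 2 * (U * U) ≤ U * (U * U) := by nlinarith [sq_nonneg U]
      nlinarith
    have e3 := mul_le_mul e1 e2 (by positivity) (le_trans (by positivity) e1)
    have e4 : A0 * (A3 + U + U) ^ 2 ≤ A0 * (9 * U ^ 2) := by
      apply mul_le_mul_of_nonneg_left _ h0.le
      nlinarith
    have e5 : 9 * A0 * U ^ 2 ≤ U * U ^ 2 := mul_le_mul_of_nonneg_right (by linarith) (by positivity)
    have e6 : U ^ 3 * 1 ≤ U ^ 3 * U ^ 2 := mul_le_mul_of_nonneg_left (by nlinarith) (by positivity)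
    have e7 : U ^ 3 = U * U ^ 2 := by ring
    have e8 : A0 * (9 * U ^ 2) = 9 * A0 * U ^ 2 := by ring
    exact sub_nonneg.mpr (by linarith only [e3, e4, e5, e6, e7, e8])
  have hF0 : F 0 < 0 := by simp only [F]; nlinarith
  obtain ⟨u, ⟨hu0, -⟩, hu⟩ := intermediate_value_Icc (show (0:ℝ) ≤ U by linarith)
    hF.continuousOn (show (0:ℝ) ∈ Set.Icc (F 0) (F U) from ⟨hF0.le, hFU⟩)
  have hupos : 0 < u := by
    rcases hu0.lt_or_eq with h | h
    · exact h
    · rw [← h] at hu; linarith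
  obtain ⟨s, hs⟩ : ∃ s, s = A3 + u := ⟨_, rfl⟩
  obtain ⟨M, hM⟩ : ∃ M, M = A2 + u * s := ⟨_, rfl⟩
  have hspos : 0 < s := by linarith
  have hMpos : 0 < M := by rw [hM]; positivity
  have hsu : 0 < s + u := by linarith
  obtain ⟨v, hv⟩ : ∃ v, v = (A1 + u * M) / (s + u) := ⟨_, rfl⟩
  have hvpos : 0 < v := by rw [hv]; positivity
  obtain ⟨w, hw⟩ : ∃ w, w = (s * M - A1) / (s + u) := ⟨_, rfl⟩
  have hvw : v + w = M := by rw [hv, hw]; field_simp; ring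
  have hvs : v * s - u * w = A1 := by rw [hv, hw]; field_simp; ring
  have hvwA : v * w = A0 := by
    have : (A1 + u * M) * (s * M - A1) - A0 * (s + u) ^ 2 = 0 := by
      rw [hM, hs]; exact hu
    rw [hv, hw]; field_simp; linarith
  have hfac : ∀ x : ℝ, x ^ 4 + A3 * x ^ 3 + A2 * x ^ 2 + A1 * x + A0
      = (x ^ 2 - u * x + v) * (x ^ 2 + s * x + w) := by
    intro x
    have a3 : A3 = s - u := by linarith
    have a2 : A2 = v + w - u * s := by linarith
    rw [← hvwA, ← hvs, a2, a3]; ring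
  have hdisc : 0 < v - u ^ 2 / 4 := by
    by_contra hcon
    have hd : 0 ≤ u ^ 2 / 4 - v := by linarith
    have hq := Real.sq_sqrt hd
    set r := Real.sqrt (u ^ 2 / 4 - v)
    have hr : 0 ≤ r := Real.sqrt_nonneg _
    have := hfac (u / 2 + r)
    have hz : (u / 2 + r) ^ 2 - u * (u / 2 + r) + v = 0 := by linear_combination hq
    rw [hz, zero_mul] at this
    have hp : 0 < u / 2 + r := by linarith
    have : 0 < (u / 2 + r) ^ 4 + A3 * (u / 2 + r) ^ 3 + A2 * (u / 2 + r) ^ 2 + A1 * (u / 2 + r) + A0 := by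
      positivity
    linarith
  have hb := Real.sq_sqrt hdisc.le
  have hbpos := Real.sqrt_pos.mpr hdisc
  set b := Real.sqrt (v - u ^ 2 / 4)
  refine ⟨⟨u / 2, b⟩, by simpa using hupos, hbpos, ?_⟩
  set p : ℂ := ⟨u / 2, b⟩ with hp
  have hq : p ^ 2 - u * p + v = 0 := by
    apply Complex.ext
    · simp [hp, pow_two]; linear_combination -hb
    · simp [hp, pow_two]; ring
  have a3 : (A3 : ℂ) = s - u := by rw [hs]; push_cast; ring
  have a2 : (A2 : ℂ) = v + w - u * s := by
    have : A2 = v + w - u * s := by linarith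
    rw [this]; push_cast; ring
  have a1 : (A1 : ℂ) = v * s - u * w := by rw [← hvs]; push_cast; ring
  have a0 : (A0 : ℂ) = v * w := by rw [← hvwA]; push_cast; ring
  rw [a0, a1, a2, a3]
  linear_combination (p ^ 2 + s * p + w) * hq

lemma mgt_hasDerivAt (c p : ℂ) (t : ℝ) :
    HasDerivAt (fun t : ℝ => (c * Complex.exp (p * t)).re) ((c * p * Complex.exp (p * t)).re) t := by
  have h1 : HasDerivAt (fun z : ℂ => c * Complex.exp (p * z)) (c * p * Complex.exp (p * t)) (t : ℂ) := by
    have := (((hasDerivAt_id (t : ℂ)).const_mul p).cexp).const_mul c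
    refine this.congr_deriv ?_
    simp only [id, mul_one]; ring
  exact h1.real_of_complex

lemma mgt_deriv (c p : ℂ) :
    deriv (fun t : ℝ => (c * Complex.exp (p * t)).re) = fun t : ℝ => (c * p * Complex.exp (p * t)).re :=
  funext fun t => (mgt_hasDerivAt c p t).deriv

lemma mgt_contDiff (c p : ℂ) :
    ContDiff ℝ (⊤ : ℕ∞) (fun t : ℝ => (c * Complex.exp (p * t)).re) := by
  have h : ContDiff ℝ (⊤ : ℕ∞) (fun t : ℝ => c * Complex.exp (p * t)) := by
    have : ContDiff ℝ (⊤ : ℕ∞) (fun t : ℝ => (t : ℂ)) := Complex.ofRealCLM.contDiff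
    exact contDiff_const.mul ((contDiff_const.mul this).cexp)
  exact Complex.reCLM.contDiff.comp h

lemma mgt_integral (c p : ℂ) (δ t : ℝ) (hp : p + δ ≠ 0) (hc : (c * (p / (p + δ))).re = 0) :
    ∫ s in (0 : ℝ)..t, Real.exp (-δ * (t - s)) * (c * p * Complex.exp (p * s)).re
      = (c * (p / (p + δ)) * Complex.exp (p * t)).re := by
  have key : ∀ s : ℝ, HasDerivAt
      (fun s : ℝ => Real.exp (-δ * t) * (c * (p / (p + δ)) * Complex.exp ((p + δ) * s)).re)
      (Real.exp (-δ * (t - s)) * (c * p * Complex.exp (p * s)).re) s := by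
    intro s
    have := (mgt_hasDerivAt (c * (p / (p + δ))) (p + δ) s).const_mul (Real.exp (-δ * t))
    refine this.congr_deriv ?_
    have e1 : c * (p / (p + δ)) * (p + δ) = c * p := by field_simp
    have e2 : Complex.exp ((p + δ) * s) = (Real.exp (δ * s) : ℝ) * Complex.exp (p * s) := by
      rw [Complex.ofReal_exp, ← Complex.exp_add]; push_cast; ring_nf
    have e3 : Real.exp (-δ * (t - s)) = Real.exp (-δ * t) * Real.exp (δ * s) := by
      rw [← Real.exp_add]; ring_nf
    rw [e1, e2, e3, mul_left_comm (c * p), Complex.re_ofReal_mul]; ring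
  rw [intervalIntegral.integral_eq_sub_of_hasDerivAt (fun s _ => key s)]
  · have e2 : Complex.exp ((p + δ) * t) = (Real.exp (δ * t) : ℝ) * Complex.exp (p * t) := by
      rw [Complex.ofReal_exp, ← Complex.exp_add]; push_cast; ring_nf
    have e3 : Real.exp (-δ * t) * Real.exp (δ * t) = 1 := by
      rw [← Real.exp_add]; simp
    rw [e2, mul_left_comm, Complex.re_ofReal_mul, ← mul_assoc, e3]
    simp only [Complex.ofReal_zero, mul_zero, Complex.exp_zero, mul_one, hc]
    ring
  · apply Continuous.intervalIntegrable
    have := (mgt_contDiff (c * p) p).continuous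
    fun_prop

lemma mgt_large (k3 c2 c1 c0 : ℝ) (hk : 0 < k3) :
    ∃ d > 0, ∀ x ≥ d, 0 < k3 * x ^ 3 + c2 * x ^ 2 + c1 * x + c0 := by
  refine ⟨1 + (|c2| + |c1| + |c0|) / k3, by positivity, fun x hx => ?_⟩
  have hx1 : 1 ≤ x := le_trans (by have : 0 ≤ (|c2| + |c1| + |c0|) / k3 := by positivity
                                   linarith) hx
  have h1 : |c2| + |c1| + |c0| < k3 * x := by
    have : (|c2| + |c1| + |c0|) / k3 < x := by linarith
    rw [div_lt_iff₀ hk] at this; linarith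
  have h2 : (|c2| + |c1| + |c0|) * x ^ 2 < k3 * x * x ^ 2 :=
    mul_lt_mul_of_pos_right h1 (by positivity)
  have h3 : -|c2| * x ^ 2 ≤ c2 * x ^ 2 :=
    mul_le_mul_of_nonneg_right (neg_abs_le c2) (by positivity)
  have h4 : -|c1| * x ≤ c1 * x := mul_le_mul_of_nonneg_right (neg_abs_le c1) (by positivity)
  have h5 : |c1| * x ≤ |c1| * x ^ 2 := mul_le_mul_of_nonneg_left (by nlinarith) (abs_nonneg _)
  have h6 : |c0| * 1 ≤ |c0| * x ^ 2 := mul_le_mul_of_nonneg_left (by nlinarith) (abs_nonneg _)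
  have h7 := neg_abs_le c0
  nlinarith


/-- Scalar (single eigenmode) reduction of the exponential growth theorem for the MGT
equation with exponential memory kernel of type II. -/
theorem scalar_mgt_memory_exponential_growth (α β γ lam : ℝ)
    (hα : 0 < α) (hβ : 0 < β) (hγ : 0 < γ) (hlam : 0 < lam) (hγαβ : γ ≤ α * β)
    (ϱ : ℝ) (hϱ₁ : β - γ / α < ϱ) (hϱ₂ : ϱ < β) :
    ∃ δ₀ > 0, ∀ δ ≥ δ₀, ∃ ε > 0, ∃ ψ : ℝ → ℝ, ContDiff ℝ (⊤ : ℕ∞) ψ ∧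
      ∃ tseq : ℕ → ℝ, StrictMono tseq ∧ (∀ n, 0 < tseq n) ∧
        Filter.Tendsto tseq Filter.atTop Filter.atTop ∧
        (∀ t : ℝ, 0 ≤ t →
          iteratedDeriv 3 ψ t + α * iteratedDeriv 2 ψ t + β * lam * deriv ψ t
            + γ * lam * ψ t
            - ϱ * δ * lam * ∫ s in (0 : ℝ)..t, Real.exp (-δ * (t - s)) * deriv ψ s = 0) ∧
        (∀ n : ℕ, Real.exp (ε * tseq n) ≤ (ψ (tseq n)) ^ 2) := by

  obtain ⟨κ, hκ⟩ : ∃ κ, κ = β - ϱ := ⟨_, rfl⟩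
  have hκ0 : 0 < κ := by linarith
  have hκγ : 0 < γ - κ * α := by
    have : κ < γ / α := by linarith
    rw [lt_div_iff₀ hα] at this; linarith
  obtain ⟨d, hd, hlarge⟩ := mgt_large (lam * (γ - κ * α))
    (2 * α * γ * lam - κ * lam * (α ^ 2 + β * lam - κ * lam) - γ * lam * α)
    (γ * lam * α ^ 2 - κ * lam * (α * β * lam - γ * lam) - γ * lam * (α ^ 2 + β * lam - κ * lam))
    (-(γ * lam * (α * β * lam - γ * lam))) (by positivity)
  refine ⟨d, hd, fun δ hδ => ?_⟩
  have hδ0 : 0 < δ := lt_of_lt_of_le hd hδ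
  obtain ⟨p, hpre, hpim, hroot⟩ := mgt_quartic (γ * lam * δ) (κ * lam * δ + γ * lam)
    (α * δ + β * lam) (α + δ) (by positivity) (by positivity) (by positivity) (by positivity)
    (by have := hlarge δ hδ; nlinarith)
  have hpδ : p + δ ≠ 0 := by
    intro h
    have := congrArg Complex.re h
    simp at this; linarith
  obtain ⟨z, hz⟩ : ∃ z, z = p / (p + δ) := ⟨_, rfl⟩
  obtain ⟨φ, hφ⟩ : ∃ φ, φ = Real.pi / 2 - Complex.arg z := ⟨_, rfl⟩
  have hpi := Real.pi_pos
  have hφlt : φ < 2 * Real.pi := by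
    have := Complex.neg_pi_lt_arg z
    linarith
  obtain ⟨c, hc⟩ : ∃ c, c = Complex.exp (φ * Complex.I) := ⟨_, rfl⟩
  have hcz : (c * (p / (p + δ))).re = 0 := by
    rw [← hz, ← Complex.norm_mul_exp_arg_mul_I z, mul_left_comm, hc, ← Complex.exp_add, ← add_mul]
    have : (φ : ℂ) + Complex.arg z = ((Real.pi / 2 : ℝ) : ℂ) := by
      rw [hφ]; push_cast; ring
    rw [this, Complex.re_ofReal_mul, Complex.exp_ofReal_mul_I_re, Real.cos_pi_div_two, mul_zero]
  refine ⟨2 * p.re, by positivity, fun t : ℝ => (c * Complex.exp (p * t)).re, mgt_contDiff c p,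
    fun n => (2 * Real.pi * (n + 1) - φ) / p.im, ?_, ?_, ?_, ?_, ?_⟩
  · intro m n hmn
    have : (m : ℝ) < n := by exact_mod_cast hmn
    simp only
    gcongr
  · intro n
    have : (0 : ℝ) ≤ n := Nat.cast_nonneg n
    apply div_pos _ hpim
    nlinarith
  · apply Filter.Tendsto.atTop_div_const hpim
    simp only [sub_eq_add_neg]
    apply Filter.tendsto_atTop_add_const_right
    apply Filter.Tendsto.const_mul_atTop (by positivity)
    exact Filter.tendsto_atTop_add_const_right _ _ tendsto_natCast_atTop_atTop
  · intro t _
    simp only [iteratedDeriv_succ, iteratedDeriv_zero, mgt_deriv]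
    rw [mgt_integral c p δ t hpδ hcz]
    have hch : p ^ 3 + α * p ^ 2 + (β * lam : ℝ) * p + (γ * lam : ℝ)
        - (ϱ * δ * lam : ℝ) * (p / (p + δ)) = 0 := by
      field_simp
      rw [hκ] at hroot
      push_cast at hroot ⊢
      linear_combination hroot
    have : ((c * Complex.exp (p * t)) * (p ^ 3 + α * p ^ 2 + (β * lam : ℝ) * p + (γ * lam : ℝ)
        - (ϱ * δ * lam : ℝ) * (p / (p + δ)))).re = 0 := by rw [hch]; simp
    rw [← this]
    simp only [← Complex.re_ofReal_mul, ← Complex.add_re, ← Complex.sub_re]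
    congr 1
    ring
  · intro n
    obtain ⟨T, hT⟩ : ∃ T, T = (2 * Real.pi * (n + 1) - φ) / p.im := ⟨_, rfl⟩
    have hTb : φ + p.im * T = ((n + 1 : ℕ) : ℝ) * (2 * Real.pi) := by
      rw [hT]; field_simp; push_cast; ring
    have : (c * Complex.exp (p * T)).re = Real.exp (p.re * T) := by
      rw [hc, ← Complex.exp_add, Complex.exp_re]
      have h1 : ((φ : ℂ) * Complex.I + p * T).re = p.re * T := by simp
      have h2 : ((φ : ℂ) * Complex.I + p * T).im = φ + p.im * T := by simp
      rw [h1, h2, hTb, Real.cos_nat_mul_two_pi, mul_one]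
    simp only [← hT]
    rw [this, ← Real.exp_nat_mul]
    apply le_of_eq; congr 1; push_cast; ring
end

section
/- Let H be a real Hilbert space, let g : [0,∞) → ℝ be continuously differentiable, let v : [0,∞) → H be continuously differentiable, and set G(t) = ∫₀ᵗ g(s) ds and Φ(t) = ∫₀ᵗ g(t−s)·‖v(t) − v(s)‖² ds − G(t)·‖v(t)‖². Then Φ is differentiable on (0,∞) and for every t > 0: −2·∫₀ᵗ g(t−s)·⟨v(s), v'(t)⟩ ds = Φ'(t) + g(t)·‖v(t)‖² − ∫₀ᵗ g'(t−s)·‖v(t) − v(s)‖² ds. -/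
open scoped RealInnerProductSpace

open MeasureTheory Topology in
/-- Leibniz rule with variable upper endpoint. -/
theorem leibniz_aux (F F' : ℝ → ℝ → ℝ) (hF : Continuous (Function.uncurry F))
    (hF' : Continuous (Function.uncurry F'))
    (hd : ∀ x s, HasDerivAt (fun y => F y s) (F' x s) x) (t : ℝ) :
    HasDerivAt (fun τ => ∫ s in (0 : ℝ)..τ, F τ s) ((∫ s in (0 : ℝ)..t, F' t s) + F t t) t := by
  have h1 : ∀ x y : ℝ, HasDerivAt (fun z => ∫ s in (0 : ℝ)..y, F z s)
      (∫ s in (0 : ℝ)..y, F' x s) x := by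
    intro x y
    obtain ⟨C, hC⟩ := ((isCompact_closedBall x 1).prod
      (isCompact_uIcc (a := (0 : ℝ)) (b := y))).exists_bound_of_continuousOn hF'.continuousOn
    refine (intervalIntegral.hasDerivAt_integral_of_dominated_loc_of_deriv_le
      (s := Metric.closedBall x 1) (bound := fun _ => C) (F := F) (F' := F')
      (Metric.closedBall_mem_nhds x one_pos) ?_ ?_ ?_ ?_ ?_ ?_).2
    · refine Filter.Eventually.of_forall fun z => ?_
      exact (hF.comp (Continuous.prodMk_right z)).aestronglyMeasurable
    · exact (hF.comp (Continuous.prodMk_right x)).intervalIntegrable _ _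
    · exact (hF'.comp (Continuous.prodMk_right x)).aestronglyMeasurable
    · refine Filter.Eventually.of_forall fun s hs z hz => ?_
      exact hC (z, s) ⟨hz, Set.uIoc_subset_uIcc hs⟩
    · exact intervalIntegrable_const
    · exact Filter.Eventually.of_forall fun s _ z _ => hd z s
  have h2 : ∀ x y : ℝ, HasDerivAt (fun z => ∫ s in (0 : ℝ)..z, F x s) (F x y) y := fun x y =>
    ((hF.comp (Continuous.prodMk_right x)).integral_hasStrictDerivAt 0 y).hasDerivAt
  have hc1 : Continuous fun p : ℝ × ℝ => ∫ s in (0 : ℝ)..p.2, F' p.1 s :=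
    intervalIntegral.continuous_parametric_primitive_of_continuous hF'
  have h3 := hasStrictFDerivAt_uncurry_coprod (𝕜 := ℝ) (u := ((t, t) : ℝ × ℝ))
    (f := fun x y => ∫ s in (0 : ℝ)..y, F x s)
    (f₁ := fun x y => ContinuousLinearMap.toSpanSingleton ℝ (∫ s in (0 : ℝ)..y, F' x s))
    (f₂ := fun x y => ContinuousLinearMap.toSpanSingleton ℝ (F x y))
    (Filter.Eventually.of_forall fun p => (h1 p.1 p.2).hasFDerivAt)
    (Filter.Eventually.of_forall fun p => (h2 p.1 p.2).hasFDerivAt)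
    (((ContinuousLinearMap.toSpanSingletonCLE (𝕜 := ℝ) (E := ℝ)).continuous.comp hc1).continuousAt)
    (((ContinuousLinearMap.toSpanSingletonCLE (𝕜 := ℝ) (E := ℝ)).continuous.comp hF).continuousAt)
  have h4 := HasFDerivAt.comp_hasDerivAt (f := fun x : ℝ => (x, x)) t h3.hasFDerivAt
    ((hasDerivAt_id t).prodMk (hasDerivAt_id t))
  refine HasDerivAt.congr_deriv h4 ?_
  change ((ContinuousLinearMap.toSpanSingleton ℝ (∫ s in (0 : ℝ)..t, F' t s)).coprod
    (ContinuousLinearMap.toSpanSingleton ℝ (F t t))) ((1 : ℝ), (1 : ℝ)) = _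
  simp

/-- A `C¹` function on `[0,∞)` extends to a `C¹` function on the line. -/
theorem extend_aux {E : Type*} [NormedAddCommGroup E] [NormedSpace ℝ E] [CompleteSpace E]
    (f : ℝ → E) (hf : ContDiffOn ℝ 1 f (Set.Ici 0)) :
    ∃ φ φ' : ℝ → E, Continuous φ' ∧ (∀ x, HasDerivAt φ (φ' x) x) ∧
      (∀ x, 0 ≤ x → φ x = f x) ∧ ∀ x, 0 ≤ x → φ' x = derivWithin f (Set.Ici 0) x := by
  have hc := hf.continuousOn_derivWithin (uniqueDiffOn_Ici 0) le_rfl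
  have hc' : Continuous fun x : ℝ => derivWithin f (Set.Ici 0) (max x 0) :=
    hc.comp_continuous (by fun_prop) (fun x => le_max_right x 0)
  refine ⟨fun x => f 0 + ∫ s in (0 : ℝ)..x, derivWithin f (Set.Ici 0) (max s 0),
    fun x => derivWithin f (Set.Ici 0) (max x 0), hc', ?_, ?_, ?_⟩
  · intro x
    exact (hc'.integral_hasStrictDerivAt 0 x).hasDerivAt.const_add _
  · intro x hx
    have := intervalIntegral.integral_eq_sub_of_hasDerivAt_of_le (f := f)
      (f' := fun x => derivWithin f (Set.Ici 0) (max x 0)) hx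
      (hf.continuousOn.mono Set.Icc_subset_Ici_self) (fun y hy => by
        have h := (hf.differentiableOn one_ne_zero y hy.1.le).hasDerivWithinAt.hasDerivAt
          (Ici_mem_nhds hy.1)
        simpa [max_eq_left hy.1.le] using h) (hc'.intervalIntegrable _ _)
    simp [this]
  · intro x hx
    simp [max_eq_left hx]

/-- Differentiation identity for the memory (convolution) term: with
`Φ(t) = ∫₀ᵗ g(t−s)‖v(t) − v(s)‖² ds − G(t)‖v(t)‖²` where `G(t) = ∫₀ᵗ g(s) ds`, one has
`−2∫₀ᵗ g(t−s)⟨v(s), v'(t)⟩ ds = Φ'(t) + g(t)‖v(t)‖² − ∫₀ᵗ g'(t−s)‖v(t) − v(s)‖² ds`. -/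
theorem memory_term_differentiation {H : Type*} [NormedAddCommGroup H]
    [InnerProductSpace ℝ H] [CompleteSpace H] (g : ℝ → ℝ) (v : ℝ → H)
    (hg : ContDiffOn ℝ 1 g (Set.Ici 0)) (hv : ContDiffOn ℝ 1 v (Set.Ici 0)) :
    ∀ t : ℝ, 0 < t →
      DifferentiableAt ℝ (fun τ => (∫ s in (0 : ℝ)..τ, g (τ - s) * ‖v τ - v s‖ ^ 2)
        - (∫ s in (0 : ℝ)..τ, g s) * ‖v τ‖ ^ 2) t ∧
      -2 * ∫ s in (0 : ℝ)..t, g (t - s) * ⟪v s, derivWithin v (Set.Ici 0) t⟫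
        = deriv (fun τ => (∫ s in (0 : ℝ)..τ, g (τ - s) * ‖v τ - v s‖ ^ 2)
            - (∫ s in (0 : ℝ)..τ, g s) * ‖v τ‖ ^ 2) t
          + g t * ‖v t‖ ^ 2
          - ∫ s in (0 : ℝ)..t, derivWithin g (Set.Ici 0) (t - s) * ‖v t - v s‖ ^ 2 := by
  intro t ht
  obtain ⟨γ, γ', hγ'c, hγ, hγg, hγ'g⟩ := extend_aux g hg
  obtain ⟨w, w', hw'c, hw, hwv, hw'v⟩ := extend_aux v hv
  have hγc : Continuous γ := continuous_iff_continuousAt.2 fun x => (hγ x).continuousAt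
  have hwc : Continuous w := continuous_iff_continuousAt.2 fun x => (hw x).continuousAt
  have hL := leibniz_aux (fun τ s => γ (τ - s) * ‖w τ - w s‖ ^ 2)
    (fun τ s => γ' (τ - s) * ‖w τ - w s‖ ^ 2 + γ (τ - s) * (2 * ⟪w τ - w s, w' τ⟫))
    (by unfold Function.uncurry; fun_prop) (by unfold Function.uncurry; fun_prop)
    (fun x s => by
      have h1 : HasDerivAt (fun y => γ (y - s)) (γ' (x - s)) x := (hγ (x - s)).comp_sub_const x s
      exact h1.mul ((hw x).sub_const (w s)).norm_sq) t
  have hG : HasDerivAt (fun τ => ∫ s in (0 : ℝ)..τ, γ s) (γ t) t :=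
    (hγc.integral_hasStrictDerivAt 0 t).hasDerivAt
  have hΦ := hL.sub (hG.mul (hw t).norm_sq)
  have hΦ' := hΦ.congr_of_eventuallyEq (f₁ := fun τ =>
      (∫ s in (0 : ℝ)..τ, g (τ - s) * ‖v τ - v s‖ ^ 2)
        - (∫ s in (0 : ℝ)..τ, g s) * ‖v τ‖ ^ 2) (by
    filter_upwards [Ioi_mem_nhds ht] with τ hτ
    have hτ0 : (0 : ℝ) ≤ τ := le_of_lt hτ
    have e1 : (∫ s in (0 : ℝ)..τ, g (τ - s) * ‖v τ - v s‖ ^ 2)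
        = ∫ s in (0 : ℝ)..τ, γ (τ - s) * ‖w τ - w s‖ ^ 2 := by
      refine intervalIntegral.integral_congr fun s hs => ?_
      rw [Set.uIcc_of_le hτ0] at hs
      simp only [hγg (τ - s) (by linarith [hs.2]), hwv τ hτ0, hwv s hs.1]
    have e2 : (∫ s in (0 : ℝ)..τ, g s) = ∫ s in (0 : ℝ)..τ, γ s := by
      refine intervalIntegral.integral_congr fun s hs => ?_
      rw [Set.uIcc_of_le hτ0] at hs
      exact (hγg s hs.1).symm
    simp only [e1, e2, Pi.sub_apply, Pi.mul_apply, hwv τ hτ0])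
  refine ⟨hΦ'.differentiableAt, ?_⟩
  rw [hΦ'.deriv]
  have e3 : (∫ s in (0 : ℝ)..t, g (t - s) * ⟪v s, derivWithin v (Set.Ici 0) t⟫)
      = ∫ s in (0 : ℝ)..t, γ (t - s) * ⟪w s, w' t⟫ := by
    refine intervalIntegral.integral_congr fun s hs => ?_
    rw [Set.uIcc_of_le ht.le] at hs
    simp only [hγg (t - s) (by linarith [hs.2]), hw'v t ht.le, hwv s hs.1]
  have e4 : (∫ s in (0 : ℝ)..t, derivWithin g (Set.Ici 0) (t - s) * ‖v t - v s‖ ^ 2)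
      = ∫ s in (0 : ℝ)..t, γ' (t - s) * ‖w t - w s‖ ^ 2 := by
    refine intervalIntegral.integral_congr fun s hs => ?_
    rw [Set.uIcc_of_le ht.le] at hs
    simp only [hγ'g (t - s) (by linarith [hs.2]), hwv t ht.le, hwv s hs.1]
  have e5 : (∫ s in (0 : ℝ)..t, γ (t - s) * (2 * ⟪w t - w s, w' t⟫))
      = 2 * ⟪w t, w' t⟫ * (∫ s in (0 : ℝ)..t, γ s)
        - 2 * ∫ s in (0 : ℝ)..t, γ (t - s) * ⟪w s, w' t⟫ := by
    have : (∫ s in (0 : ℝ)..t, γ s) = ∫ s in (0 : ℝ)..t, γ (t - s) := by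
      simp
    rw [this, ← intervalIntegral.integral_const_mul, ← intervalIntegral.integral_const_mul,
      ← intervalIntegral.integral_sub]
    · refine intervalIntegral.integral_congr fun s _ => ?_
      simp only [inner_sub_left]
      ring
    · exact Continuous.intervalIntegrable (by fun_prop) _ _
    · exact Continuous.intervalIntegrable (by fun_prop) _ _
  rw [e3, e4, intervalIntegral.integral_add
    (Continuous.intervalIntegrable (by fun_prop) _ _)
    (Continuous.intervalIntegrable (by fun_prop) _ _), e5, ← hγg t ht.le, ← hwv t ht.le]
  simp only [sub_self, norm_zero]
  ring
end

section
/- Let α, β, γ, λ₁ > 0 with γ ≤ αβ, and let ϱ ∈ (β − γ/α, β). For δ > 0 define the stability numbers κ(δ) = (αβ − γ + ϱδ)/(α + δ) and ϖ(δ) = (αβδ² − γδ² − αϱδ²)/(γ + δβ − ϱδ). Then κ(δ) > 0 and γ + δβ − ϱδ > 0 for every δ > 0, and there exists δ₀ > 0 such that ϖ(δ) < −λ₁·κ(δ) for every δ ≥ δ₀. -/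
/-- The stability numbers `κ(δ) = (αβ − γ + ϱδ)/(α + δ)` and
`ϖ(δ) = (αβδ² − γδ² − αϱδ²)/(γ + δβ − ϱδ)` satisfy `κ(δ) > 0` and `γ + δβ − ϱδ > 0` for
all `δ > 0`, and `ϖ(δ) < −λ₁κ(δ)` for all sufficiently large `δ`. -/
theorem stability_numbers (α β γ lam₁ : ℝ) (hα : 0 < α) (hβ : 0 < β) (hγ : 0 < γ)
    (hlam₁ : 0 < lam₁) (hγαβ : γ ≤ α * β) (ϱ : ℝ) (hϱ₁ : β - γ / α < ϱ) (hϱ₂ : ϱ < β) :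
    (∀ δ : ℝ, 0 < δ → 0 < (α * β - γ + ϱ * δ) / (α + δ) ∧ 0 < γ + δ * β - ϱ * δ) ∧
    ∃ δ₀ > 0, ∀ δ ≥ δ₀,
      (α * β * δ ^ 2 - γ * δ ^ 2 - α * ϱ * δ ^ 2) / (γ + δ * β - ϱ * δ)
        < -lam₁ * ((α * β - γ + ϱ * δ) / (α + δ)) := by
  have hc : 0 < γ + α * ϱ - α * β := by
    have h : α * (β - γ / α) < α * ϱ := mul_lt_mul_of_pos_left hϱ₁ hα
    have h2 : α * (β - γ / α) = α * β - γ := by field_simp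
    linarith
  have hr : 0 < ϱ := by
    have h : 0 < α * ϱ := by linarith
    exact pos_of_mul_pos_right h hα.le
  have hb : 0 < β - ϱ := by linarith
  have hD : ∀ δ : ℝ, 0 < δ → 0 < γ + δ * β - ϱ * δ := by
    intro δ hδ
    have := mul_pos hδ hb
    linarith
  refine ⟨fun δ hδ => ⟨?_, hD δ hδ⟩, ?_⟩
  · have := mul_pos hr hδ
    apply div_pos <;> linarith
  · have hM : 0 < lam₁ * ϱ * (γ + (β - ϱ)) := by positivity
    refine ⟨1 + lam₁ * ϱ * (γ + (β - ϱ)) / (γ + α * ϱ - α * β), by positivity, ?_⟩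
    intro δ hδ
    have hq := div_pos hM hc
    have hδ1 : 1 ≤ δ := by linarith
    have hδ0 : 0 < δ := by linarith
    have hle : lam₁ * ϱ * (γ + (β - ϱ)) ≤ δ * (γ + α * ϱ - α * β) := by
      rw [← div_le_iff₀ hc]
      linarith
    have hk : (α * β - γ + ϱ * δ) / (α + δ) < ϱ := by
      rw [div_lt_iff₀ (by linarith)]
      linarith
    have hw : (α * β * δ ^ 2 - γ * δ ^ 2 - α * ϱ * δ ^ 2) / (γ + δ * β - ϱ * δ)
        ≤ -lam₁ * ϱ := by
      rw [div_le_iff₀ (hD δ hδ0)]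
      have h1 := mul_le_mul_of_nonneg_left hle hδ0.le
      have h2 : 0 ≤ lam₁ * ϱ * γ * (δ - 1) := by
        have : 0 ≤ δ - 1 := by linarith
        positivity
      linarith
    have := mul_lt_mul_of_pos_left hk hlam₁
    linarith
end
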